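/- arXiv:1602.07061 — 2 statements merged into one kernel-verified Lean document; each statement's English description precedes it below -/
import Mathlib

section
/- Let k be a field, let n ≥ 1, and let w₁, w₂ : {1,…,n} → ℤ be nondecreasing sequences of integers. Let P = (p_{ij}) be an n×n matrix with entries in the polynomial ring k[x,y] such that for all i, j: if w₂(i) ≥ w₁(j) then p_{ij} is homogeneous of degree w₂(i) − w₁(j), and if w₂(i) < w₁(j) then p_{ij} = 0. If det P ≠ 0, then w₁(j) ≤ w₂(j) for every j ∈ {1,…,n}. -/
/-- **Polynomial-matrix form of Lemma 3.2.2.**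
Let `k` be a field, `n ≥ 1`, and `w₁ w₂ : Fin n → ℤ` nondecreasing. Let `P` be an
`n × n` matrix with entries in `k[x,y]` such that `P i j` is homogeneous of degree
`w₂ i - w₁ j` whenever `w₂ i ≥ w₁ j`, and `P i j = 0` whenever `w₂ i < w₁ j`.
If `det P ≠ 0` then `w₁ j ≤ w₂ j` for every `j`. -/
theorem stmt0 {k : Type*} [Field k] (n : ℕ) (hn : 1 ≤ n)
    (w₁ w₂ : Fin n → ℤ) (hw₁ : Monotone w₁) (hw₂ : Monotone w₂)
    (P : Matrix (Fin n) (Fin n) (MvPolynomial (Fin 2) k))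
    (hhom : ∀ i j, w₁ j ≤ w₂ i → (P i j).IsHomogeneous ((w₂ i - w₁ j).toNat))
    (hzero : ∀ i j, w₂ i < w₁ j → P i j = 0)
    (hdet : P.det ≠ 0) :
    ∀ j, w₁ j ≤ w₂ j := by
  intro j
  by_contra hj
  rw [not_le] at hj
  apply hdet
  rw [Matrix.det_apply]
  apply Finset.sum_eq_zero
  intro σ _
  have key : ∃ l, P (σ l) l = 0 := by
    by_contra hne
    push Not at hne
    have hmap : (Finset.Ici j).card ≤ (Finset.Ioi j).card := by
      apply Finset.card_le_card_of_injOn σ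
      · intro l hl
        have hl' : j ≤ l := by simpa using hl
        have : j < σ l := by
          by_contra hc
          rw [not_lt] at hc
          exact hne l (hzero _ _ (((hw₂ hc).trans_lt hj).trans_le (hw₁ hl')))
        simpa using this
      · exact σ.injective.injOn
    rw [Fin.card_Ici, Fin.card_Ioi] at hmap
    have := j.isLt
    omega
  obtain ⟨l, hl⟩ := key
  have hp : ∏ i, P (σ i) i = 0 :=
    Finset.prod_eq_zero (f := fun i => P (σ i) i) (Finset.mem_univ l) hl
  rw [hp, smul_zero]
end

section
/- Let p be a prime, let A be a commutative ring with char A = p, and let B be an étale A-algebra (formally étale and of finite presentation). Let A_φ denote A regarded as an A-algebra via the Frobenius endomorphism a ↦ a^p of A. Then the ring homomorphism B ⊗_A A_φ → B determined by b ⊗ a ↦ b^p · a (the relative Frobenius of B over A) is bijective. -/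
open TensorProduct

universe u

/-- `A` regarded as an `A`-algebra via the Frobenius endomorphism `a ↦ a ^ p`. -/
def FrobTwist (p : ℕ) (A : Type*) : Type _ := A

instance (p : ℕ) (A : Type*) [CommRing A] : CommRing (FrobTwist p A) :=
  inferInstanceAs (CommRing A)

instance (p : ℕ) (A : Type*) [CommRing A] [Fact p.Prime] [CharP A p] :
    Algebra A (FrobTwist p A) :=
  (frobenius A p).toAlgebra

lemma charAux (p : ℕ) [hp : Fact p.Prime] (R : Type*) [CommRing R] [Nontrivial R]
    (h : (p : R) = 0) : CharP R p := by
  obtain ⟨q, hq⟩ := CharP.exists R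
  have hd : q ∣ p := (CharP.cast_eq_zero_iff R q p).mp h
  rcases (Nat.dvd_prime hp.out).mp hd with h1 | h1
  · subst h1
    exact absurd hq (CharP.ringChar_ne_one.elim ∘ fun h => (CharP.eq R (ringChar.charP R) h))
  · exact h1 ▸ hq

lemma addPowAux (p : ℕ) [Fact p.Prime] {R : Type*} [CommRing R]
    (h : (p : R) = 0) (x y : R) : (x + y) ^ p = x ^ p + y ^ p := by
  rcases subsingleton_or_nontrivial R with _ | _
  · exact Subsingleton.elim _ _
  · have := charAux p R h
    exact add_pow_char x y p

lemma subPowAux (p : ℕ) [Fact p.Prime] {R : Type*} [CommRing R]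
    (h : (p : R) = 0) (x y : R) : (x - y) ^ p = x ^ p - y ^ p := by
  have := addPowAux p h (x - y) y
  rw [sub_add_cancel] at this
  rw [this, add_sub_cancel_right]

/-- An étale map `C → B` of étale `R`-algebras which is an isomorphism up to `p`-th powers
is an isomorphism. -/
lemma keyAux (p : ℕ) [hp : Fact p.Prime] (R C B : Type*) [CommRing R] [CommRing C] [CommRing B]
    [Algebra R C] [Algebra R B] [Algebra C B] [IsScalarTower R C B]
    [Algebra.FormallyEtale R C] [Algebra.FormallyEtale R B]
    [Algebra.FinitePresentation R C] [Algebra.FinitePresentation R B]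
    (hpC : (p : C) = 0)
    (h1 : ∀ b : B, ∃ c : C, algebraMap C B c = b ^ p)
    (h2 : ∀ c : C, algebraMap C B c = 0 → c ^ p = 0) :
    Function.Bijective (algebraMap C B) := by
  have hE : Algebra.FormallyEtale C B := .of_restrictScalars (R := R)
  have hT : Algebra.FiniteType C B := .of_restrictScalars_finiteType R C B
  have hI : Algebra.IsIntegral C B := ⟨fun b => by
    obtain ⟨c, hc⟩ := h1 b
    refine IsIntegral.of_pow hp.out.pos (x := b) ?_
    rw [← hc]
    exact isIntegral_algebraMap⟩
  have hF : Module.Finite C B := Algebra.IsIntegral.finite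
  have hpBB : (p : B ⊗[C] B) = 0 := by
    have := congrArg (algebraMap C (B ⊗[C] B)) hpC
    simpa using this
  have hnil : IsNilpotent (KaehlerDifferential.ideal C B) := by
    rw [(KaehlerDifferential.ideal_fg C B).isNilpotent_iff_le_nilradical,
      ← KaehlerDifferential.span_range_eq_ideal, Ideal.span_le]
    rintro _ ⟨b, rfl⟩
    refine ⟨p, ?_⟩
    obtain ⟨c, hc⟩ := h1 b
    change ((1 : B) ⊗ₜ[C] b - b ⊗ₜ[C] (1 : B)) ^ p = 0
    rw [subPowAux p hpBB, Algebra.TensorProduct.tmul_pow, Algebra.TensorProduct.tmul_pow,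
      one_pow, ← hc, Algebra.algebraMap_eq_smul_one, TensorProduct.smul_tmul, sub_self]
  have hepi : Algebra.IsEpi C B := by
    rw [Algebra.isEpi_iff_forall_one_tmul_eq]
    intro b
    have : (Algebra.TensorProduct.includeRight : B →ₐ[C] B ⊗[C] B) =
        Algebra.TensorProduct.includeLeft := by
      refine Algebra.FormallyUnramified.ext _ hnil fun x => ?_
      rw [Ideal.Quotient.eq, ← KaehlerDifferential.span_range_eq_ideal]
      exact Ideal.subset_span ⟨x, rfl⟩
    exact DFunLike.congr_fun this b
  have hs : Function.Surjective (algebraMap C B) :=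
    Algebra.isEpi_iff_surjective_algebraMap_of_finite.mp hepi
  refine ⟨?_, hs⟩
  have hid := (Algebra.FormallyEtale.iff_of_surjective hs).mp hE
  have hfg : (RingHom.ker (algebraMap C B)).FG :=
    Algebra.FinitePresentation.ker_fG_of_surjective (IsScalarTower.toAlgHom R C B) hs
  have hn : IsNilpotent (RingHom.ker (algebraMap C B)) := by
    rw [hfg.isNilpotent_iff_le_nilradical]
    exact fun c hc => ⟨p, h2 c hc⟩
  obtain ⟨n, hn⟩ := hn
  rw [RingHom.injective_iff_ker_eq_bot]
  rw [← Ideal.zero_eq_bot, ← hid.pow_succ_eq n, pow_succ, hn, zero_mul]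

/-- **Étale algebras in characteristic `p` are relatively perfect (input to Prop. 1.6.2).**
Let `p` be prime, `A` a commutative ring of characteristic `p`, and `B` an étale
`A`-algebra (formally étale and of finite presentation). Then the ring homomorphism
`B ⊗_A A_φ → B` determined by `b ⊗ a ↦ b^p · a` (the relative Frobenius of `B` over
`A`), where `A_φ` is `A` viewed as an `A`-algebra via Frobenius, is bijective. -/
theorem stmt7 (p : ℕ) [Fact p.Prime] (A B : Type u) [CommRing A] [CommRing B]
    [Algebra A B] [CharP A p]
    [Algebra.FormallyEtale A B] [Algebra.FinitePresentation A B] :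
    ∃ f : (B ⊗[A] FrobTwist p A) →+* B,
      (∀ (b : B) (a : FrobTwist p A),
        f (b ⊗ₜ[A] a) = b ^ p * algebraMap A B a) ∧ Function.Bijective f := by
  have hpA : (p : A) = 0 := CharP.cast_eq_zero A p
  have hpB : (p : B) = 0 := by
    rw [← map_natCast (algebraMap A B), hpA, map_zero]
  letI i1 : Algebra (FrobTwist p A) (FrobTwist p B) := inferInstanceAs (Algebra A B)
  haveI : Algebra.FormallyEtale (FrobTwist p A) (FrobTwist p B) :=
    inferInstanceAs (Algebra.FormallyEtale A B)
  haveI : Algebra.FinitePresentation (FrobTwist p A) (FrobTwist p B) :=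
    inferInstanceAs (Algebra.FinitePresentation A B)
  letI i2 : Algebra A (FrobTwist p B) :=
    ((algebraMap (FrobTwist p A) (FrobTwist p B)).comp
      (algebraMap A (FrobTwist p A))).toAlgebra
  haveI : IsScalarTower A (FrobTwist p A) (FrobTwist p B) := IsScalarTower.of_algebraMap_eq' rfl
  let F : B →ₐ[A] FrobTwist p B :=
    { toFun := fun b => (b ^ p : B)
      map_one' := one_pow p
      map_mul' := fun x y => mul_pow x y p
      map_zero' := zero_pow (Fact.out : p.Prime).ne_zero
      map_add' := fun x y => addPowAux p hpB x y
      commutes' := fun a => (map_pow (algebraMap A B) a p).symm }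
  let g : (FrobTwist p A ⊗[A] B) →ₐ[FrobTwist p A] FrobTwist p B :=
    Algebra.TensorProduct.lift (Algebra.ofId _ _) F (fun _ _ => Commute.all _ _)
  have hg : ∀ (a : FrobTwist p A) (b : B),
      g (a ⊗ₜ[A] b) = algebraMap (FrobTwist p A) (FrobTwist p B) a * F b := fun a b => by
    simp [g, Algebra.ofId_apply]
  have hpC : (p : FrobTwist p A ⊗[A] B) = 0 := by
    rw [← map_natCast (algebraMap A (FrobTwist p A ⊗[A] B)), hpA, map_zero]
  letI i3 : Algebra (FrobTwist p A ⊗[A] B) (FrobTwist p B) := g.toRingHom.toAlgebra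
  haveI : IsScalarTower (FrobTwist p A) (FrobTwist p A ⊗[A] B) (FrobTwist p B) :=
    IsScalarTower.of_algebraMap_eq fun x => (g.commutes x).symm
  -- going around: `1 ⊗ g c = c ^ p`
  have key : ∀ c : FrobTwist p A ⊗[A] B,
      (Algebra.TensorProduct.includeRight : B →ₐ[A] FrobTwist p A ⊗[A] B) (g c) = c ^ p := by
    intro c
    induction c using TensorProduct.induction_on with
    | zero =>
      rw [zero_pow (Fact.out : p.Prime).ne_zero, map_zero]
      exact map_zero (Algebra.TensorProduct.includeRight : B →ₐ[A] FrobTwist p A ⊗[A] B)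
    | tmul a b =>
      rw [hg, Algebra.TensorProduct.tmul_pow]
      let aA : A := a
      have e1 : algebraMap A B aA * b ^ p = aA • (b ^ p) := (Algebra.smul_def aA (b ^ p)).symm
      change (1 : FrobTwist p A) ⊗ₜ[A] (algebraMap A B aA * b ^ p) = _
      rw [e1]
      rw [← TensorProduct.smul_tmul, Algebra.smul_def, mul_one]
      rfl
    | add x y hx hy =>
      rw [addPowAux p hpC, ← hx, ← hy, map_add]
      exact map_add (Algebra.TensorProduct.includeRight : B →ₐ[A] FrobTwist p A ⊗[A] B) _ _
  have hbij : Function.Bijective g := by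
    refine keyAux p (FrobTwist p A) (FrobTwist p A ⊗[A] B) (FrobTwist p B) hpC ?_ ?_
    · intro b
      let bB : B := b
      refine ⟨(1 : FrobTwist p A) ⊗ₜ[A] bB, ?_⟩
      have e2 := hg 1 bB
      rw [map_one, one_mul] at e2
      exact e2
    · intro c hc
      change g c = 0 at hc
      rw [← key c, hc]
      exact map_zero (Algebra.TensorProduct.includeRight : B →ₐ[A] FrobTwist p A ⊗[A] B)
  let f : (B ⊗[A] FrobTwist p A) →+* FrobTwist p B :=
    g.toRingHom.comp (Algebra.TensorProduct.comm A B (FrobTwist p A)).toAlgHom.toRingHom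
  refine ⟨f, fun b a => ?_, ?_⟩
  · change g (a ⊗ₜ[A] b) = _
    rw [hg, mul_comm]
    rfl
  · exact hbij.comp (Algebra.TensorProduct.comm A B (FrobTwist p A)).bijective
end
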